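/- The Powerset axiom is realized (in a classical/ZFC background, as in IZF): let A be a pca. There exists an element e ∈ A such that for every x ∈ V(A) there exists y ∈ V(A) such that for all z ∈ V(A) and all a, b ∈ A: if for every triple ⟨c,d,u⟩ ∈ z the applications ac and bd are defined and ac = bd ⊩ u ∈ x (i.e., a = b realizes z ⊆ x), then ea and eb are defined and ea = eb ⊩ z ∈ y. -/

import Mathlib

universe u

/-- A partial combinatory algebra: a set with at least two elements, a partial
binary application, and combinators `k`, `s` with `ka↓`, `sa↓`, `sab↓`,
`kab ≃ a` and `sabc ≃ ac(bc)`. -/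
structure PCA (A : Type u) where
  app : A → A → Part A
  k : A
  s : A
  nontrivial : ∃ a b : A, a ≠ b
  k_def : ∀ a : A, (app k a).Dom
  s_def : ∀ a : A, (app s a).Dom
  s_app_def : ∀ a b : A, ((app s a).bind fun x => app x b).Dom
  k_spec : ∀ a b : A, ((app k a).bind fun x => app x b) = Part.some a
  s_spec : ∀ a b c : A,
    (((app s a).bind fun x => app x b).bind fun x => app x c)
      = (app a c).bind fun u => (app b c).bind fun v => app u v

namespace PCA
variable {A : Type u} (P : PCA A)

/-- Apply a possibly undefined value to an element of `A` (left association). -/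
def apl (x : Part A) (b : A) : Part A := x.bind fun a => P.app a b

end PCA

/-- The ZF-set coding the triple `⟨a, b, y⟩` (via an embedding `inj` of the
pca carrier into the sets). -/
def TripleName {A : Type} (inj : A → ZFSet) (a b : A) (y : ZFSet) : ZFSet :=
  ZFSet.pair (inj a) (ZFSet.pair (inj b) y)

/-- The realizability universe `V(A)`: a ZF-set is a name iff it is a set of
triples `⟨a, b, y⟩` with `a b : A` and `y` a name.  (For injective `inj` the
decomposition of a triple is unique, so the two clauses express exactly this.) -/
inductive IsName {A : Type} (inj : A → ZFSet) : ZFSet → Prop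
  | mk (x : ZFSet)
      (htriple : ∀ z ∈ x, ∃ (a b : A) (y : ZFSet), z = TripleName inj a b y)
      (hname : ∀ (a b : A) (y : ZFSet), TripleName inj a b y ∈ x → IsName inj y) :
      IsName inj x

/-- Extensional generic realizability for the atomic formulas, relative to
fixed projection combinators `p0`, `p1`:
`Realizes P p0 p1 inj true a b x y` means `a = b ⊩ x ∈ y`, and
`Realizes P p0 p1 inj false a b x y` means `a = b ⊩ x = y`.
Since the value of a partial application is unique when it exists, the pairs
of hypotheses `(h1def, h1)` and `(h2def, h2)` of the `eq` constructor express
exactly "for every ⟨c,d,z⟩ ∈ x, (ac)₀ = (bd)₀ ⊩ z ∈ y" (with all the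
applications defined), and symmetrically for `y` with `p1`; the relation is
well-founded in the rank of the names, hence this least fixed point is the
relation defined by transfinite recursion. -/
inductive Realizes {A : Type} (P : PCA A) (p0 p1 : A) (inj : A → ZFSet) :
    Bool → A → A → ZFSet → ZFSet → Prop
  | mem {a b : A} {x y : ZFSet} (a0 b0 a1 b1 : A) (z : ZFSet)
      (ha0 : a0 ∈ P.app p0 a) (hb0 : b0 ∈ P.app p0 b)
      (ha1 : a1 ∈ P.app p1 a) (hb1 : b1 ∈ P.app p1 b)
      (hz : TripleName inj a0 b0 z ∈ y)
      (he : Realizes P p0 p1 inj false a1 b1 x z) :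
      Realizes P p0 p1 inj true a b x y
  | eq {a b : A} {x y : ZFSet}
      (h1def : ∀ (c d : A) (z : ZFSet), TripleName inj c d z ∈ x →
        ∃ u v u0 v0 : A, u ∈ P.app a c ∧ v ∈ P.app b d ∧
          u0 ∈ P.app p0 u ∧ v0 ∈ P.app p0 v)
      (h1 : ∀ (c d : A) (z : ZFSet) (u v u0 v0 : A), TripleName inj c d z ∈ x →
        u ∈ P.app a c → v ∈ P.app b d → u0 ∈ P.app p0 u → v0 ∈ P.app p0 v →
        Realizes P p0 p1 inj true u0 v0 z y)
      (h2def : ∀ (c d : A) (z : ZFSet), TripleName inj c d z ∈ y →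
        ∃ u v u1 v1 : A, u ∈ P.app a c ∧ v ∈ P.app b d ∧
          u1 ∈ P.app p1 u ∧ v1 ∈ P.app p1 v)
      (h2 : ∀ (c d : A) (z : ZFSet) (u v u1 v1 : A), TripleName inj c d z ∈ y →
        u ∈ P.app a c → v ∈ P.app b d → u1 ∈ P.app p1 u → v1 ∈ P.app p1 v →
        Realizes P p0 p1 inj true u1 v1 z x) :
      Realizes P p0 p1 inj false a b x y

/-- `a = b ⊩ x = y`. -/
def RealEq {A : Type} (P : PCA A) (p0 p1 : A) (inj : A → ZFSet) (a b : A) (x y : ZFSet) : Prop :=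
  Realizes P p0 p1 inj false a b x y

/-- `a = b ⊩ x ∈ y`. -/
def RealMem {A : Type} (P : PCA A) (p0 p1 : A) (inj : A → ZFSet) (a b : A) (x y : ZFSet) : Prop :=
  Realizes P p0 p1 inj true a b x y

/-!
If `a = b ⊩ u = v`, then every name occurring in `u` is realized equal to a name occurring in `v`.
By induction on `v`, the names realized equal to `v` therefore form a set, and so do the names `z`
realized to be a subset of `x`. Let `i` realize reflexivity of equality, uniformly in the name, and
let `y` be the set of the triples `⟨i, i, z⟩`. Then `p i i` realizes `z ∈ y` whatever the realizers
of `z ⊆ x` are, so that `e` can be taken to be the constant function `k (p i i)`.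
-/

universe v

namespace PCA

section Combinators

variable {A : Type u} (P : PCA A)

theorem exists_k_app (a : A) :
    ∃ ka, P.app P.k a = Part.some ka ∧ ∀ b, P.app ka b = Part.some a := by
  have hka := (Part.some_get (P.k_def a)).symm
  refine ⟨_, hka, fun b => ?_⟩
  have hkab := P.k_spec a b
  rwa [hka, Part.bind_some] at hkab

theorem exists_s_app (a b : A) :
    ∃ sa sab, P.app P.s a = Part.some sa ∧ P.app sa b = Part.some sab ∧
      ∀ c, P.app sab c = (P.app a c).bind fun u => (P.app b c).bind fun v => P.app u v := by
  obtain ⟨sa, hsa, hsab⟩ := Part.bind_eq_some_iff.1 (Part.some_get (P.s_app_def a b)).symm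
  refine ⟨sa, _, hsa, hsab, fun c => ?_⟩
  have hsabc := P.s_spec a b c
  rwa [hsa, Part.bind_some, hsab, Part.bind_some] at hsabc

theorem exists_const_app (a : A) : ∃ e, ∀ b, a ∈ P.app e b :=
  (P.exists_k_app a).imp fun _ h b => Part.eq_some_iff.1 (h.2 b)

theorem exists_app_app_iff {q a b c d : A} {Q : A → A → Prop} :
    (∃ u ∈ P.app a c, ∃ v ∈ P.app b d, ∃ u' ∈ P.app q u, ∃ v' ∈ P.app q v, Q u' v') ↔
      (∃ u v u' v', u ∈ P.app a c ∧ v ∈ P.app b d ∧ u' ∈ P.app q u ∧ v' ∈ P.app q v) ∧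
      ∀ u v u' v', u ∈ P.app a c → v ∈ P.app b d → u' ∈ P.app q u → v' ∈ P.app q v → Q u' v' := by
  constructor
  · rintro ⟨u, hu, v, hv, u', hu', v', hv', hQ⟩
    refine ⟨⟨u, v, u', v', hu, hv, hu', hv'⟩, fun _ _ _ _ hw hx hw' hx' => ?_⟩
    obtain rfl := Part.mem_unique hu hw
    obtain rfl := Part.mem_unique hv hx
    obtain rfl := Part.mem_unique hu' hw'
    obtain rfl := Part.mem_unique hv' hx'
    exact hQ
  · rintro ⟨⟨u, v, u', v', hu, hv, hu', hv'⟩, hQ⟩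
    exact ⟨u, hu, v, hv, u', hu', v', hv', hQ u v u' v' hu hv hu' hv'⟩

/-- Polynomials over a pca in `n` variables: applicative terms built from variables and elements of
`A`. The variables are de Bruijn indices, variable `0` being the one bound by `Term.lam`. -/
inductive Term (A : Type u) (n : ℕ) : Type u
  | var (i : Fin n) : Term A n
  | const (a : A) : Term A n
  | app (t t' : Term A n) : Term A n

/-- The partial value of a polynomial under an assignment of its variables. -/
def eval {n : ℕ} (ρ : Fin n → A) : Term A n → Part A
  | .var i => Part.some (ρ i)
  | .const a => Part.some a
  | .app t t' => (eval ρ t).bind fun f => (eval ρ t').bind fun a => P.app f a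

/-- Bracket abstraction of variable `0`: the polynomial `λx₀. t`. -/
def Term.lam {n : ℕ} : Term A (n + 1) → Term A n
  | .var i => Fin.cases (.app (.app (.const P.s) (.const P.k)) (.const P.k))
      (fun j => .app (.const P.k) (.var j)) i
  | .const a => .app (.const P.k) (.const a)
  | .app t t' => .app (.app (.const P.s) t.lam) t'.lam

theorem eval_lam {n : ℕ} (ρ : Fin n → A) (t : Term A (n + 1)) :
    ∃ f, P.eval ρ (t.lam P) = Part.some f ∧
      ∀ a, P.app f a = P.eval (Matrix.vecCons a ρ) t := by
  induction t with
  | var i =>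
    cases i using Fin.cases with
    | zero =>
      obtain ⟨sk, skk, hsk, hskk, hskk_app⟩ := P.exists_s_app P.k P.k
      refine ⟨skk, by simp [Term.lam, eval, hsk, hskk], fun a => ?_⟩
      obtain ⟨ka, hka, hka_app⟩ := P.exists_k_app a
      simp [eval, hskk_app, hka, hka_app]
    | succ j =>
      obtain ⟨f, hf, hf_app⟩ := P.exists_k_app (ρ j)
      exact ⟨f, by simp [Term.lam, eval, hf], fun a => by simp [eval, hf_app]⟩
  | const b =>
    obtain ⟨f, hf, hf_app⟩ := P.exists_k_app b
    exact ⟨f, by simp [Term.lam, eval, hf], fun a => by simp [eval, hf_app]⟩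
  | app t t' ih ih' =>
    obtain ⟨f, hf, hf_app⟩ := ih
    obtain ⟨f', hf', hf'_app⟩ := ih'
    obtain ⟨sf, sff', hsf, hsff', hsff'_app⟩ := P.exists_s_app f f'
    refine ⟨sff', by simp [Term.lam, eval, hf, hf', hsf, hsff'], fun a => ?_⟩
    simp [eval, hsff'_app, hf_app, hf'_app]

theorem exists_lam_lam (t : Term A 2) :
    ∃ f, ∀ x, ∃ fx, P.app f x = Part.some fx ∧ ∀ c, P.app fx c = P.eval ![c, x] t := by
  obtain ⟨f, -, hf⟩ := P.eval_lam ![] (t.lam P)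
  refine ⟨f, fun x => ?_⟩
  obtain ⟨fx, hfx, hfx_app⟩ := P.eval_lam ![x] t
  exact ⟨fx, (hf x).trans hfx, hfx_app⟩

/- With `f = λx c. t` and `w = λx c. f (x x) c`, the solution is the self-application `w w`. -/
theorem exists_recursive (t : Term A 2) : ∃ i, ∀ c, P.app i c = P.eval ![c, i] t := by
  obtain ⟨f, hf⟩ := P.exists_lam_lam t
  obtain ⟨w, hw⟩ := P.exists_lam_lam
    (.app (.app (.const f) (.app (.var 1) (.var 1))) (.var 0))
  obtain ⟨i, hi, hi_app⟩ := hw w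
  obtain ⟨fi, hfi, hfi_app⟩ := hf i
  refine ⟨i, fun c => ?_⟩
  rw [hi_app, ← hfi_app]
  simp [eval, hi, hfi]

end Combinators

section Pairing

variable {A : Type u} {P : PCA A} {p p0 p1 : A} {pair : A → A → A}

/-- `pair` is the total function computed by the pairing combinator `p`, with projections computed
by `p0` and `p1`. -/
structure IsPairing (P : PCA A) (p p0 p1 : A) (pair : A → A → A) : Prop where
  pair_mem (a b : A) : pair a b ∈ P.apl (P.app p a) b
  fst_mem (a b : A) : a ∈ P.app p0 (pair a b)
  snd_mem (a b : A) : b ∈ P.app p1 (pair a b)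

theorem exists_isPairing (hp : ∀ a b : A, (P.apl (P.app p a) b).Dom)
    (hp0 : ∀ a b : A, ((P.apl (P.app p a) b).bind fun w => P.app p0 w) = Part.some a)
    (hp1 : ∀ a b : A, ((P.apl (P.app p a) b).bind fun w => P.app p1 w) = Part.some b) :
    ∃ pair, P.IsPairing p p0 p1 pair :=
  ⟨fun a b => (P.apl (P.app p a) b).get (hp a b),
    { pair_mem a b := Part.get_mem (hp a b)
      fst_mem a b := Part.eq_some_iff.1 (((hp a b).bind _).symm.trans (hp0 a b))
      snd_mem a b := Part.eq_some_iff.1 (((hp a b).bind _).symm.trans (hp1 a b)) }⟩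

theorem IsPairing.exists_pair_pair_mem_app (h : P.IsPairing p p0 p1 pair) :
    ∃ i, ∀ c, pair (pair c i) (pair c i) ∈ P.app i c := by
  let pairTerm (t t' : Term A 2) : Term A 2 := .app (.app (.const p) t) t'
  let q := pairTerm (.var 0) (.var 1)
  obtain ⟨i, hi⟩ := P.exists_recursive (pairTerm q q)
  have eval_pairTerm {ρ t t' a b} (ht : P.eval ρ t = Part.some a)
      (ht' : P.eval ρ t' = Part.some b) : P.eval ρ (pairTerm t t') = Part.some (pair a b) := by
    rw [← Part.eq_some_iff.2 (h.pair_mem a b)]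
    simp [pairTerm, eval, ht, ht', apl]
  refine ⟨i, fun c => Part.eq_some_iff.1 ((hi c).trans ?_)⟩
  have hq : P.eval ![c, i] q = Part.some (pair c i) := eval_pairTerm rfl rfl
  exact eval_pairTerm hq hq

end Pairing

end PCA

section Names

variable {A : Type} {inj : A → ZFSet.{v}}

/-- The domain of a name `x`: the class of all `y` occurring in a triple `⟨a, b, y⟩ ∈ x`. -/
def nameDom (inj : A → ZFSet.{v}) (x : ZFSet.{v}) : Set ZFSet.{v} :=
  {y | ∃ a b, TripleName inj a b y ∈ x}

/-- The names whose domain is contained in the class `s`. -/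
def namesOver (inj : A → ZFSet.{v}) (s : Set ZFSet.{v}) : Set ZFSet.{v} :=
  {z | IsName inj z ∧ nameDom inj z ⊆ s}

theorem tripleName_right_injective (a b : A) : Function.Injective (TripleName inj a b) := by
  intro y y' h
  simpa only [TripleName, ZFSet.pair_inj, true_and] using h

theorem IsName.ext {x y : ZFSet.{v}} (hx : IsName inj x) (hy : IsName inj y)
    (h : ∀ a b z, TripleName inj a b z ∈ x ↔ TripleName inj a b z ∈ y) : x = y := by
  obtain ⟨_, hx_triple, -⟩ := hx
  obtain ⟨_, hy_triple, -⟩ := hy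
  ext t
  constructor <;> intro ht
  · obtain ⟨a, b, z, rfl⟩ := hx_triple t ht
    exact (h a b z).1 ht
  · obtain ⟨a, b, z, rfl⟩ := hy_triple t ht
    exact (h a b z).2 ht

theorem IsName.of_mem_nameDom {x y : ZFSet.{v}} (hx : IsName inj x) (hy : y ∈ nameDom inj x) :
    IsName inj y := by
  obtain ⟨_, -, hname⟩ := hx
  obtain ⟨a, b, hab⟩ := hy
  exact hname a b y hab

theorem isName_range_tripleName {ι : Type*} [Small.{v} ι] (a b : ι → A) {f : ι → ZFSet.{v}}
    (hf : ∀ j, IsName inj (f j)) :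
    IsName inj (ZFSet.range fun j => TripleName inj (a j) (b j) (f j)) := by
  refine .mk _ (fun t ht => ?_) fun c d y ht => ?_
  · obtain ⟨j, rfl⟩ := ZFSet.mem_range.1 ht
    exact ⟨a j, b j, f j, rfl⟩
  · obtain ⟨j, hj⟩ := ZFSet.mem_range.1 ht
    obtain ⟨-, -, rfl⟩ : inj (a j) = inj c ∧ inj (b j) = inj d ∧ f j = y := by
      simpa only [TripleName, ZFSet.pair_inj] using hj
    exact hf j

instance small_nameDom (x : ZFSet.{v}) : Small.{v} (nameDom inj x) := by
  have h_eq : nameDom inj x = ⋃ a, ⋃ b, TripleName inj a b ⁻¹' (x : Set ZFSet) := by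
    ext y
    simp [nameDom]
  have : Small.{v} (x : Set ZFSet) := x.small_coe
  have (a b : A) : Small.{v} (TripleName inj a b ⁻¹' (x : Set ZFSet)) :=
    small_of_injective ((tripleName_right_injective a b).restrictPreimage _)
  rw [h_eq]
  infer_instance

instance small_namesOver (s : Set ZFSet.{v}) [Small.{v} s] : Small.{v} (namesOver inj s) := by
  let triples (z : namesOver inj s) : Set (A × A × s) :=
    {q | TripleName inj q.1 q.2.1 q.2.2 ∈ z.1}
  have triples_injective : Function.Injective triples := by
    rintro ⟨z, hz, hzs⟩ ⟨z', hz', hzs'⟩ h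
    refine Subtype.ext (hz.ext hz' fun a b y => ⟨fun hy => ?_, fun hy => ?_⟩)
    · exact (Set.ext_iff.1 h (a, b, ⟨y, hzs ⟨a, b, hy⟩⟩)).1 hy
    · exact (Set.ext_iff.1 h (a, b, ⟨y, hzs' ⟨a, b, hy⟩⟩)).2 hy
  exact small_of_injective triples_injective

end Names

section Realizability

variable {A : Type} {P : PCA A} {p p0 p1 : A} {inj : A → ZFSet.{v}} {pair : A → A → A}
  {a b : A} {x y : ZFSet.{v}}

theorem realMem_iff :
    RealMem P p0 p1 inj a b x y ↔
      ∃ a0 ∈ P.app p0 a, ∃ b0 ∈ P.app p0 b, ∃ a1 ∈ P.app p1 a, ∃ b1 ∈ P.app p1 b,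
        ∃ z, TripleName inj a0 b0 z ∈ y ∧ RealEq P p0 p1 inj a1 b1 x z := by
  constructor
  · rintro ⟨a0, b0, a1, b1, z, ha0, hb0, ha1, hb1, hz, he⟩
    exact ⟨a0, ha0, b0, hb0, a1, ha1, b1, hb1, z, hz, he⟩
  · rintro ⟨a0, ha0, b0, hb0, a1, ha1, b1, hb1, z, hz, he⟩
    exact .mem a0 b0 a1 b1 z ha0 hb0 ha1 hb1 hz he

theorem realEq_iff :
    RealEq P p0 p1 inj a b x y ↔
      (∀ c d z, TripleName inj c d z ∈ x → ∃ u ∈ P.app a c, ∃ v ∈ P.app b d,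
        ∃ u0 ∈ P.app p0 u, ∃ v0 ∈ P.app p0 v, RealMem P p0 p1 inj u0 v0 z y) ∧
      (∀ c d z, TripleName inj c d z ∈ y → ∃ u ∈ P.app a c, ∃ v ∈ P.app b d,
        ∃ u1 ∈ P.app p1 u, ∃ v1 ∈ P.app p1 v, RealMem P p0 p1 inj u1 v1 z x) := by
  constructor
  · rintro (_ | ⟨h1def, h1, h2def, h2⟩)
    exact ⟨fun c d z hz => P.exists_app_app_iff.2
        ⟨h1def c d z hz, fun u v u0 v0 => h1 c d z u v u0 v0 hz⟩,
      fun c d z hz => P.exists_app_app_iff.2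
        ⟨h2def c d z hz, fun u v u1 v1 => h2 c d z u v u1 v1 hz⟩⟩
  · rintro ⟨hxy, hyx⟩
    exact .eq (fun c d z hz => (P.exists_app_app_iff.1 (hxy c d z hz)).1)
      (fun c d z u v u0 v0 hz => (P.exists_app_app_iff.1 (hxy c d z hz)).2 u v u0 v0)
      (fun c d z hz => (P.exists_app_app_iff.1 (hyx c d z hz)).1)
      (fun c d z u v u1 v1 hz => (P.exists_app_app_iff.1 (hyx c d z hz)).2 u v u1 v1)

theorem PCA.IsPairing.realMem_pair (h : P.IsPairing p p0 p1 pair) {c d z}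
    (hz : TripleName inj c d z ∈ y) (hxz : RealEq P p0 p1 inj a b x z) :
    RealMem P p0 p1 inj (pair c a) (pair d b) x y :=
  realMem_iff.2 ⟨c, h.fst_mem c a, d, h.fst_mem d b,
    a, h.snd_mem c a, b, h.snd_mem d b, z, hz, hxz⟩

/- A triple `⟨c, d, z⟩ ∈ x` needs `(i c)₀ = (i d)₀` and `(i c)₁ = (i d)₁` to realize `z ∈ x`; by
induction `p c i = p d i` does, whence the equation `i c = p (p c i) (p c i)`. -/
theorem PCA.IsPairing.exists_realEq_refl (h : P.IsPairing p p0 p1 pair) (inj : A → ZFSet.{v}) :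
    ∃ i, ∀ x, IsName inj x → RealEq P p0 p1 inj i i x x := by
  obtain ⟨i, hi⟩ := h.exists_pair_pair_mem_app
  refine ⟨i, fun x hx => ?_⟩
  induction hx with
  | mk x _ _ ih =>
    refine realEq_iff.2 ⟨fun c d z hz => ?_, fun c d z hz => ?_⟩
    · exact ⟨_, hi c, _, hi d, _, h.fst_mem _ _, _, h.fst_mem _ _,
        h.realMem_pair hz (ih c d z hz)⟩
    · exact ⟨_, hi c, _, hi d, _, h.snd_mem _ _, _, h.snd_mem _ _,
        h.realMem_pair hz (ih c d z hz)⟩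

variable (P p0 p1 inj) in
/-- The names realized, by some pair of realizers, to be equal to `x`. -/
def realizedEqs (x : ZFSet.{v}) : Set ZFSet.{v} :=
  {u | IsName inj u ∧ ∃ a b, RealEq P p0 p1 inj a b u x}

variable (P p0 p1 inj) in
/-- The names realized, by some pair of realizers, to be elements of `x`. -/
def realizedMems (x : ZFSet.{v}) : Set ZFSet.{v} :=
  {u | IsName inj u ∧ ∃ a b, RealMem P p0 p1 inj a b u x}

theorem realizedMems_subset (x : ZFSet.{v}) :
    realizedMems P p0 p1 inj x ⊆ ⋃ z : nameDom inj x, realizedEqs P p0 p1 inj z := by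
  rintro u ⟨hu, a, b, hab⟩
  obtain ⟨a0, -, b0, -, a1, -, b1, -, z, hz, huz⟩ := realMem_iff.1 hab
  exact Set.mem_iUnion.2 ⟨⟨z, a0, b0, hz⟩, hu, a1, b1, huz⟩

theorem IsName.mem_namesOver_realizedMems {z : ZFSet.{v}} (hz : IsName inj z)
    (h : ∀ c d u, TripleName inj c d u ∈ z → ∃ a b, RealMem P p0 p1 inj a b u x) :
    z ∈ namesOver inj (realizedMems P p0 p1 inj x) :=
  ⟨hz, fun u hu => ⟨hz.of_mem_nameDom hu, let ⟨c, d, hcd⟩ := hu; h c d u hcd⟩⟩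

theorem realizedEqs_subset (x : ZFSet.{v}) :
    realizedEqs P p0 p1 inj x ⊆ namesOver inj (realizedMems P p0 p1 inj x) := by
  rintro u ⟨hu, a, b, hab⟩
  refine hu.mem_namesOver_realizedMems fun c d z hz => ?_
  obtain ⟨-, -, -, -, u0, -, v0, -, hmem⟩ := (realEq_iff.1 hab).1 c d z hz
  exact ⟨u0, v0, hmem⟩

instance small_realizedMems [∀ z : nameDom inj x, Small.{v} (realizedEqs P p0 p1 inj z)] :
    Small.{v} (realizedMems P p0 p1 inj x) :=
  small_subset (realizedMems_subset x)

theorem IsName.small_realizedEqs (hx : IsName inj x) : Small.{v} (realizedEqs P p0 p1 inj x) := by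
  induction hx with
  | mk x _ _ ih =>
    have (z : nameDom inj x) : Small.{v} (realizedEqs P p0 p1 inj z) :=
      let ⟨a, b, hz⟩ := z.2
      ih a b z hz
    exact small_subset (realizedEqs_subset x)

theorem IsName.small_realizedMems (hx : IsName inj x) : Small.{v} (realizedMems P p0 p1 inj x) :=
  have (z : nameDom inj x) : Small.{v} (realizedEqs P p0 p1 inj z) :=
    (hx.of_mem_nameDom z.2).small_realizedEqs
  inferInstance

end Realizability

/-- **The Powerset axiom is realized** (in a classical background, as for IZF):
there is `e ∈ A` such that for every `x ∈ V(A)` there is `y ∈ V(A)` such that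
for all `z ∈ V(A)` and `a, b ∈ A`, if `a = b` realizes `z ⊆ x` (i.e. for every
`⟨c,d,u⟩ ∈ z`, `ac` and `bd` are defined and `ac = bd ⊩ u ∈ x`), then `ea` and
`eb` are defined and `ea = eb ⊩ z ∈ y`. -/
theorem powerset_realized {A : Type} (P : PCA A)
    (p p0 p1 : A)
    (hp : ∀ a b : A, (P.apl (P.app p a) b).Dom)
    (hp0 : ∀ a b : A, ((P.apl (P.app p a) b).bind fun w => P.app p0 w) = Part.some a)
    (hp1 : ∀ a b : A, ((P.apl (P.app p a) b).bind fun w => P.app p1 w) = Part.some b)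
    (inj : A → ZFSet) (hinj : Function.Injective inj)
    :
    ∃ e : A, ∀ x : ZFSet, IsName inj x →
      ∃ y : ZFSet, IsName inj y ∧
        ∀ z : ZFSet, IsName inj z → ∀ a b : A,
          (∀ (c d : A) (u : ZFSet), TripleName inj c d u ∈ z →
            ∃ ac bd : A, ac ∈ P.app a c ∧ bd ∈ P.app b d ∧
              RealMem P p0 p1 inj ac bd u x) →
          ∃ ea eb : A, ea ∈ P.app e a ∧ eb ∈ P.app e b ∧
            RealMem P p0 p1 inj ea eb z y := by
  obtain ⟨pair, hpair⟩ := PCA.exists_isPairing hp hp0 hp1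
  obtain ⟨i, hi⟩ := hpair.exists_realEq_refl inj
  obtain ⟨e, he⟩ := P.exists_const_app (pair i i)
  refine ⟨e, fun x hx => ?_⟩
  let C := namesOver inj (realizedMems P p0 p1 inj x)
  have h_small : Small (realizedMems P p0 p1 inj x) := hx.small_realizedMems
  refine ⟨ZFSet.range fun z : C => TripleName inj i i z,
    isName_range_tripleName (fun _ => i) (fun _ => i) fun z => z.2.1, fun z hz a b hab => ?_⟩
  have hzC : z ∈ C := hz.mem_namesOver_realizedMems fun c d u hu =>
    let ⟨ac, bd, _, _, hmem⟩ := hab c d u hu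
    ⟨ac, bd, hmem⟩
  have hz_triple : TripleName inj i i z ∈ ZFSet.range fun z : C => TripleName inj i i z :=
    ZFSet.mem_range_self (⟨z, hzC⟩ : C)
  exact ⟨_, _, he a, he b, hpair.realMem_pair hz_triple (hi z hz)⟩
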